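/- For h = 2, the boundary map ∂ is surjective onto the automorphisms of the boundary forms: for every group automorphism φ of ℤ²/A₂ℤ² satisfying ∂λ(φ(ξ),φ(η)) = ∂λ(ξ,η) and ∂θ(φ(ξ)) = ∂θ(ξ) for all ξ, η, there exists P ∈ GL₂(ℤ) with P^T A₂ P = A₂ such that φ([x]) = [(P^T)^{-1} x] for all x ∈ ℤ². Equivalently, the boundary automorphism set bAut(ℤ², [Q₂]) is trivial. -/

import Mathlib

open Matrix

noncomputable section

/-- The matrix `Q_h`: first row all `4`; in rows `2,…,h` diagonal and
above-diagonal entries are `2`, below-diagonal entries are `0`. -/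
def Qmat (h : ℕ) : Matrix (Fin h) (Fin h) ℤ :=
  Matrix.of fun i j => if (i : ℕ) = 0 then 4 else if i ≤ j then 2 else 0

/-- `A_h = Q_h + Q_hᵀ`. -/
def Amat (h : ℕ) : Matrix (Fin h) (Fin h) ℤ := Qmat h + (Qmat h)ᵀ

/-- `A_h` viewed as a rational matrix. -/
def AmatQ (h : ℕ) : Matrix (Fin h) (Fin h) ℚ := (Amat h).map (Int.cast)

/-- `Q_h` viewed as a rational matrix. -/
def QmatQ (h : ℕ) : Matrix (Fin h) (Fin h) ℚ := (Qmat h).map (Int.cast)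

/-- The cokernel `ℤ^h / A_h ℤ^h`. -/
abbrev Coker (h : ℕ) := (Fin h → ℤ) ⧸ LinearMap.range ((Amat h).mulVecLin)

/-- The quotient map `ℤ^h → ℤ^h / A_h ℤ^h`. -/
def ckMk {h : ℕ} (x : Fin h → ℤ) : Coker h := Submodule.Quotient.mk x

def ratVec {h : ℕ} (x : Fin h → ℤ) : Fin h → ℚ := fun i => (x i : ℚ)

/-- The boundary linking form `∂λ` computed on representatives:
`x ᵀ A_h⁻¹ y mod ℤ`, valued in `ℚ/ℤ`. -/
def linkR (h : ℕ) (x y : Fin h → ℤ) : AddCircle (1 : ℚ) :=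
  ((ratVec x ⬝ᵥ ((AmatQ h)⁻¹ *ᵥ ratVec y) : ℚ) : AddCircle (1 : ℚ))

/-- The boundary quadratic form `∂θ` computed on representatives:
`xᵀ A_h⁻¹ Q_h A_h⁻¹ x mod ℤ`, valued in `ℚ/ℤ`. -/
def quadR (h : ℕ) (x : Fin h → ℤ) : AddCircle (1 : ℚ) :=
  ((ratVec x ⬝ᵥ (((AmatQ h)⁻¹ * QmatQ h * (AmatQ h)⁻¹) *ᵥ ratVec x) : ℚ) : AddCircle (1 : ℚ))

/-!
Write `A₂ = 4 SᵀS` with `S` unimodular. In the coordinates `x = Sᵀu` the cokernel is `(ℤ/4)²`, the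
linking form is `u ⬝ v / 4` and the quadratic form is `u ⬝ u / 8`. An integral vector of the plane
with `u ⬝ u ≡ 1 mod 8` is congruent mod `4` to a vector of norm exactly `1`, so the images under `φ`
of the two coordinate vectors lift to unit vectors. The linking form makes their dot product
divisible by `4`, and Cauchy–Schwarz bounds it by `1`, so it vanishes: the lifts are the columns of
an integral orthogonal matrix `W`, and `P = S⁻¹WS` is an isometry of `4 SᵀS` inducing `φ`.
-/

section GramMatrix

variable {n R : Type*} [Fintype n] [CommRing R]

lemma two_mul_dotProduct_mulVec_self (M : Matrix n n R) (x : n → R) :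
    2 * (x ⬝ᵥ M *ᵥ x) = x ⬝ᵥ (M + Mᵀ) *ᵥ x := by
  rw [add_mulVec, dotProduct_add, dotProduct_transpose_mulVec, two_mul]

variable [DecidableEq n]

lemma inv_mul_mul_inv_add_transpose {Q A : Matrix n n R} (hQ : Q + Qᵀ = A) (hA : IsUnit A.det) :
    A⁻¹ * Q * A⁻¹ + (A⁻¹ * Q * A⁻¹)ᵀ = A⁻¹ := by
  have hsymm : Aᵀ = A := by rw [← hQ, transpose_add, transpose_transpose, add_comm]
  calc A⁻¹ * Q * A⁻¹ + (A⁻¹ * Q * A⁻¹)ᵀ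
      = A⁻¹ * (Q + Qᵀ) * A⁻¹ := by
        simp only [transpose_mul, transpose_nonsing_inv, hsymm, mul_add, add_mul, mul_assoc]
    _ = A⁻¹ := by rw [hQ, nonsing_inv_mul A hA, one_mul]

lemma dotProduct_inv_smul_gram_mulVec {K : Type*} [Field K] {c : K} (hc : c ≠ 0)
    {S : Matrix n n K} (hS : IsUnit S.det) (u v : n → K) :
    Sᵀ *ᵥ u ⬝ᵥ (c • (Sᵀ * S))⁻¹ *ᵥ Sᵀ *ᵥ v = (u ⬝ᵥ v) / c := by
  have hinv : (c • (Sᵀ * S))⁻¹ = c⁻¹ • (S⁻¹ * Sᵀ⁻¹) := by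
    refine inv_eq_left_inv ?_
    rw [smul_mul_smul_comm, inv_mul_cancel₀ hc, one_smul, mul_assoc,
      nonsing_inv_mul_cancel_left _ _ (isUnit_det_transpose S hS), nonsing_inv_mul S hS]
  have hcancel : S * (S⁻¹ * Sᵀ⁻¹) * Sᵀ = 1 := by
    rw [mul_nonsing_inv_cancel_left _ _ hS, nonsing_inv_mul _ (isUnit_det_transpose S hS)]
  rw [hinv, mulVec_transpose, ← dotProduct_mulVec, smul_mulVec, mulVec_smul, dotProduct_smul,
    mulVec_mulVec, mulVec_mulVec, hcancel, one_mulVec, smul_eq_mul, inv_mul_eq_div]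

variable {S W : Matrix n n R}

lemma transpose_mulVec_surjective (hS : IsUnit S.det) : Function.Surjective (Sᵀ *ᵥ ·) :=
  mulVec_surjective_iff_isUnit.2 ((isUnit_iff_isUnit_det _).2 (isUnit_det_transpose S hS))

lemma transpose_mulVec_smul_mem_range_smul_gram (c : R) (hS : IsUnit S.det) (z : n → R) :
    Sᵀ *ᵥ (c • z) ∈ LinearMap.range (c • (Sᵀ * S)).mulVecLin := by
  refine ⟨S⁻¹ *ᵥ z, ?_⟩
  rw [mulVecLin_apply, smul_mulVec, mulVec_mulVec, mul_nonsing_inv_cancel_right _ _ hS, mulVec_smul]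

lemma of_mem_orthogonalGroup_iff {w : n → n → R} :
    of w ∈ orthogonalGroup n R ↔ ∀ i j, w i ⬝ᵥ w j = (1 : Matrix n n R) i j := by
  rw [mem_orthogonalGroup_iff, ← Matrix.ext_iff]
  rfl

lemma isUnit_det_conj_orthogonal (hS : IsUnit S.det) (hW : W ∈ orthogonalGroup n R) :
    IsUnit (S⁻¹ * W * S).det := by
  rw [det_conj' ((isUnit_iff_isUnit_det S).2 hS)]
  exact isUnit_det_of_right_inverse ((mem_orthogonalGroup_iff n R).1 hW)

lemma conj_orthogonal_isometry_smul_gram (c : R) (hS : IsUnit S.det)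
    (hW : W ∈ orthogonalGroup n R) :
    (S⁻¹ * W * S)ᵀ * (c • (Sᵀ * S)) * (S⁻¹ * W * S) = c • (Sᵀ * S) := by
  have hSP : S * (S⁻¹ * W * S) = W * S := by
    rw [mul_assoc, mul_nonsing_inv_cancel_left _ _ hS]
  calc (S⁻¹ * W * S)ᵀ * (c • (Sᵀ * S)) * (S⁻¹ * W * S)
      = c • ((S * (S⁻¹ * W * S))ᵀ * (S * (S⁻¹ * W * S))) := by
        rw [Matrix.mul_smul, Matrix.smul_mul, transpose_mul S]
        simp only [mul_assoc]
    _ = c • (Sᵀ * (Wᵀ * W) * S) := by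
        rw [hSP, transpose_mul]
        simp only [mul_assoc]
    _ = c • (Sᵀ * S) := by rw [(mem_orthogonalGroup_iff' n R).1 hW, mul_one]

lemma inv_transpose_conj_orthogonal_mul_transpose (hS : IsUnit S.det)
    (hW : W ∈ orthogonalGroup n R) :
    (S⁻¹ * W * S)ᵀ⁻¹ * Sᵀ = Sᵀ * W := by
  have hinv : (S⁻¹ * W * S)⁻¹ = S⁻¹ * Wᵀ * S := by
    rw [Matrix.mul_inv_rev, Matrix.mul_inv_rev, nonsing_inv_nonsing_inv S hS,
      inv_eq_left_inv ((mem_orthogonalGroup_iff' n R).1 hW), mul_assoc]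
  rw [← transpose_nonsing_inv, ← transpose_mul, hinv, mul_assoc,
    mul_nonsing_inv_cancel_left _ _ hS, transpose_mul, transpose_transpose]

end GramMatrix

section Congruence

lemma addCircle_coe_intCast_div_eq_iff {K : Type*} [Field K] [CharZero K] {m : ℤ} (hm : m ≠ 0)
    {a b : ℤ} :
    ((a / m : K) : AddCircle (1 : K)) = (b / m : K) ↔ a ≡ b [ZMOD m] := by
  have hm' : (m : K) ≠ 0 := Int.cast_ne_zero.2 hm
  rw [Int.modEq_comm, Int.modEq_iff_dvd, ← sub_eq_zero, ← AddCircle.coe_sub,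
    AddCircle.coe_eq_zero_iff]
  refine exists_congr fun k ↦ ?_
  rw [zsmul_one, ← sub_div, eq_div_iff hm', mul_comm, eq_comm]
  norm_cast

lemma four_dvd_of_eight_dvd_sq {a : ℤ} (ha : 8 ∣ a ^ 2) : 4 ∣ a := by
  obtain ⟨b, rfl⟩ : 2 ∣ a := Int.prime_two.dvd_of_dvd_pow (dvd_trans (by norm_num) ha)
  have hb : 2 ∣ b ^ 2 := by
    rw [mul_pow] at ha
    omega
  exact mul_dvd_mul_left 2 (Int.prime_two.dvd_of_dvd_pow hb)

lemma four_dvd_of_odd_of_sq_add_sq_modEq_one {a b : ℤ} (ha : Odd a)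
    (hab : a ^ 2 + b ^ 2 ≡ 1 [ZMOD 8]) : 4 ∣ b := by
  have hdvd_a : 8 ∣ a ^ 2 - 1 := Int.eight_dvd_sq_sub_one_of_odd ha
  have hdvd_ab : 8 ∣ a ^ 2 + b ^ 2 - 1 := hab.symm.dvd
  exact four_dvd_of_eight_dvd_sq (by omega)

lemma exists_sq_eq_one_modEq_four_of_odd {a : ℤ} (ha : Odd a) :
    ∃ e : ℤ, e ^ 2 = 1 ∧ e ≡ a [ZMOD 4] := by
  have hmod : a % 4 = 1 ∨ a % 4 = 3 := by
    rw [Int.odd_iff] at ha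
    omega
  rcases hmod with h | h
  · exact ⟨1, by norm_num, h.symm⟩
  · exact ⟨-1, by norm_num, by simp [Int.ModEq, h]⟩

lemma exists_dotProduct_self_eq_one_modEq_four {u : Fin 2 → ℤ} (hu : u ⬝ᵥ u ≡ 1 [ZMOD 8]) :
    ∃ w : Fin 2 → ℤ, w ⬝ᵥ w = 1 ∧ ∀ i, w i ≡ u i [ZMOD 4] := by
  rw [vec2_dotProduct, ← sq, ← sq] at hu
  have hodd : Odd (u 0 ^ 2 + u 1 ^ 2) := Int.odd_iff.2 (hu.of_dvd (by norm_num))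
  rcases Int.even_or_odd (u 0) with h0 | h0
  · have h1 : Odd (u 1) :=
      (Int.odd_pow' two_ne_zero).1 ((Int.odd_add'.1 hodd).2 (h0.pow_of_ne_zero two_ne_zero))
    have hdvd : 4 ∣ u 0 := four_dvd_of_odd_of_sq_add_sq_modEq_one h1 (by rwa [add_comm])
    obtain ⟨e, he, he1⟩ := exists_sq_eq_one_modEq_four_of_odd h1
    exact ⟨![0, e], by simp [← sq, he],
      Fin.forall_fin_two.2 ⟨(Int.modEq_zero_iff_dvd.2 hdvd).symm, he1⟩⟩
  · have hdvd : 4 ∣ u 1 := four_dvd_of_odd_of_sq_add_sq_modEq_one h0 hu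
    obtain ⟨e, he, he0⟩ := exists_sq_eq_one_modEq_four_of_odd h0
    exact ⟨![e, 0], by simp [← sq, he],
      Fin.forall_fin_two.2 ⟨he0, (Int.modEq_zero_iff_dvd.2 hdvd).symm⟩⟩

lemma dotProduct_eq_zero_of_modEq {n : Type*} [Fintype n] {m : ℤ} (hm : 1 < m) {v w : n → ℤ}
    (hv : v ⬝ᵥ v = 1) (hw : w ⬝ᵥ w = 1) (hvw : v ⬝ᵥ w ≡ 0 [ZMOD m]) : v ⬝ᵥ w = 0 := by
  have hle : (v ⬝ᵥ w) ^ 2 ≤ 1 := by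
    have hcs := Finset.sum_mul_sq_le_sq_mul_sq Finset.univ v w
    simp only [sq (v _), sq (w _)] at hcs
    change (v ⬝ᵥ w) ^ 2 ≤ (v ⬝ᵥ v) * (w ⬝ᵥ w) at hcs
    rwa [hv, hw, one_mul] at hcs
  exact Int.eq_zero_of_abs_lt_dvd (Int.modEq_zero_iff_dvd.1 hvw)
    (((sq_le_one_iff_abs_le_one _).1 hle).trans_lt hm)

end Congruence

section BoundaryForms

lemma QmatQ_add_transpose (h : ℕ) : QmatQ h + (QmatQ h)ᵀ = AmatQ h := by
  ext i j
  simp [AmatQ, QmatQ, Amat]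

variable {h : ℕ}

lemma quadR_eq_coe_half (hA : IsUnit (AmatQ h).det) (x : Fin h → ℤ) :
    quadR h x = ((ratVec x ⬝ᵥ (AmatQ h)⁻¹ *ᵥ ratVec x) / 2 : ℚ) := by
  have hhalf := two_mul_dotProduct_mulVec_self ((AmatQ h)⁻¹ * QmatQ h * (AmatQ h)⁻¹) (ratVec x)
  rw [inv_mul_mul_inv_add_transpose (QmatQ_add_transpose h) hA] at hhalf
  rw [quadR, ← hhalf, mul_div_cancel_left₀ _ two_ne_zero]

lemma map_ckMk_mulVec (φ : Coker h →+ Coker h) {M N : Matrix (Fin h) (Fin h) ℤ}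
    (hφ : ∀ j, φ (ckMk (M.col j)) = ckMk (N.col j)) (u : Fin h → ℤ) :
    φ (ckMk (M *ᵥ u)) = ckMk (N *ᵥ u) := by
  have hext : φ.toIntLinearMap ∘ₗ Submodule.mkQ _ ∘ₗ M.mulVecLin =
      Submodule.mkQ _ ∘ₗ N.mulVecLin :=
    (Pi.basisFun ℤ (Fin h)).ext fun j ↦ by simpa [ckMk] using hφ j
  exact LinearMap.congr_fun hext u

lemma ratVec_mulVec (M : Matrix (Fin h) (Fin h) ℤ) (u : Fin h → ℤ) :
    ratVec (M *ᵥ u) = M.map Int.cast *ᵥ ratVec u := by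
  ext i
  simp [ratVec, mulVec, dotProduct]

lemma ratVec_dotProduct_ratVec (u v : Fin h → ℤ) :
    ratVec u ⬝ᵥ ratVec v = ((u ⬝ᵥ v : ℤ) : ℚ) := by
  simp [ratVec, dotProduct]

variable {m : ℤ} {S : Matrix (Fin h) (Fin h) ℤ}

lemma AmatQ_eq_smul_gram (hA : Amat h = m • (Sᵀ * S)) :
    AmatQ h = (m : ℚ) • ((S.map Int.cast)ᵀ * S.map Int.cast) := by
  ext i j
  simp [AmatQ, hA, Matrix.mul_apply, -zsmul_eq_mul]

lemma isUnit_det_map_intCast (hS : IsUnit S.det) :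
    IsUnit (S.map (Int.cast : ℤ → ℚ)).det := by
  rw [← Int.cast_det]
  exact hS.map (Int.castRingHom ℚ)

lemma ratVec_dotProduct_inv_mulVec_of_gram (hA : Amat h = m • (Sᵀ * S)) (hm : m ≠ 0)
    (hS : IsUnit S.det) (u v : Fin h → ℤ) :
    ratVec (Sᵀ *ᵥ u) ⬝ᵥ (AmatQ h)⁻¹ *ᵥ ratVec (Sᵀ *ᵥ v) = ((u ⬝ᵥ v : ℤ) : ℚ) / m := by
  rw [AmatQ_eq_smul_gram hA, ratVec_mulVec, ratVec_mulVec, transpose_map,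
    dotProduct_inv_smul_gram_mulVec (Int.cast_ne_zero.2 hm) (isUnit_det_map_intCast hS),
    ratVec_dotProduct_ratVec]

lemma linkR_eq_linkR_iff_of_gram (hA : Amat h = m • (Sᵀ * S)) (hm : m ≠ 0)
    (hS : IsUnit S.det) (u v u' v' : Fin h → ℤ) :
    linkR h (Sᵀ *ᵥ u) (Sᵀ *ᵥ v) = linkR h (Sᵀ *ᵥ u') (Sᵀ *ᵥ v') ↔
      u ⬝ᵥ v ≡ u' ⬝ᵥ v' [ZMOD m] := by
  simp only [linkR, ratVec_dotProduct_inv_mulVec_of_gram hA hm hS]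
  exact addCircle_coe_intCast_div_eq_iff hm

lemma quadR_eq_quadR_iff_of_gram (hA : Amat h = m • (Sᵀ * S)) (hm : m ≠ 0)
    (hS : IsUnit S.det) (u v : Fin h → ℤ) :
    quadR h (Sᵀ *ᵥ u) = quadR h (Sᵀ *ᵥ v) ↔ u ⬝ᵥ u ≡ v ⬝ᵥ v [ZMOD m * 2] := by
  have hdet : IsUnit (AmatQ h).det := by
    rw [AmatQ_eq_smul_gram hA, det_smul, det_mul, det_transpose]
    have hS' := isUnit_det_map_intCast hS
    exact ((Int.cast_ne_zero.2 hm).isUnit.pow _).mul (hS'.mul hS')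
  rw [quadR_eq_coe_half hdet, quadR_eq_coe_half hdet,
    ratVec_dotProduct_inv_mulVec_of_gram hA hm hS, ratVec_dotProduct_inv_mulVec_of_gram hA hm hS,
    div_div, div_div,
    ← addCircle_coe_intCast_div_eq_iff (K := ℚ) (mul_ne_zero hm two_ne_zero)]
  simp only [Int.cast_mul, Int.cast_ofNat]

lemma ckMk_transpose_mulVec_eq_of_modEq (hA : Amat h = m • (Sᵀ * S)) (hS : IsUnit S.det)
    {u v : Fin h → ℤ} (huv : ∀ i, u i ≡ v i [ZMOD m]) :
    (ckMk (Sᵀ *ᵥ u) : Coker h) = ckMk (Sᵀ *ᵥ v) := by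
  choose z hz using fun i ↦ (huv i).symm.dvd
  have huvz : u - v = m • z := funext hz
  rw [ckMk, ckMk, Submodule.Quotient.eq, ← mulVec_sub, huvz, hA]
  exact transpose_mulVec_smul_mem_range_smul_gram m hS z

theorem exists_isometry_of_orthonormal_of_gram (hA : Amat h = m • (Sᵀ * S)) (hS : IsUnit S.det)
    (φ : Coker h →+ Coker h) {w : Fin h → Fin h → ℤ}
    (hw : ∀ i j, w i ⬝ᵥ w j = (1 : Matrix (Fin h) (Fin h) ℤ) i j)
    (hφ : ∀ j, φ (ckMk (Sᵀ *ᵥ Pi.single j 1)) = ckMk (Sᵀ *ᵥ w j)) :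
    ∃ P : Matrix (Fin h) (Fin h) ℤ, IsUnit P.det ∧ Pᵀ * Amat h * P = Amat h ∧
      ∀ x : Fin h → ℤ, φ (ckMk x) = ckMk ((Pᵀ)⁻¹ *ᵥ x) := by
  have hW : (of w)ᵀ ∈ orthogonalGroup (Fin h) ℤ :=
    transpose_mem_unitaryGroup_iff.2 (of_mem_orthogonalGroup_iff.2 hw)
  refine ⟨S⁻¹ * (of w)ᵀ * S, isUnit_det_conj_orthogonal hS hW,
    hA ▸ conj_orthogonal_isometry_smul_gram m hS hW, fun x ↦ ?_⟩
  obtain ⟨u, rfl⟩ := transpose_mulVec_surjective hS x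
  rw [mulVec_mulVec, inv_transpose_conj_orthogonal_mul_transpose hS hW]
  refine map_ckMk_mulVec φ (fun j ↦ ?_) u
  rw [← mulVec_single_one, ← mulVec_single_one, ← mulVec_mulVec, mulVec_single_one (of w)ᵀ]
  exact hφ j

end BoundaryForms

section RankTwo

/-- A unimodular `S` with `A₂ = 4 SᵀS`. In the coordinates `x = Sᵀu` it identifies `ℤ² / A₂ℤ²` with
`(ℤ/4)²`, and the boundary forms with `u ⬝ v / 4` and `u ⬝ u / 8`. -/
def gramFactor : Matrix (Fin 2) (Fin 2) ℤ := !![1, 0; 1, 1]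

lemma isUnit_det_gramFactor : IsUnit gramFactor.det := by
  simp [gramFactor]

lemma Amat_two_eq_smul_gram : Amat 2 = (4 : ℤ) • (gramFactorᵀ * gramFactor) := by
  decide

lemma exists_unit_ckMk_eq_of_quadR_eq {x u : Fin 2 → ℤ} (hu : u ⬝ᵥ u = 1)
    (hx : quadR 2 x = quadR 2 (gramFactorᵀ *ᵥ u)) :
    ∃ w : Fin 2 → ℤ, w ⬝ᵥ w = 1 ∧ (ckMk (gramFactorᵀ *ᵥ w) : Coker 2) = ckMk x := by
  obtain ⟨v, rfl⟩ := transpose_mulVec_surjective isUnit_det_gramFactor x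
  rw [quadR_eq_quadR_iff_of_gram Amat_two_eq_smul_gram four_ne_zero isUnit_det_gramFactor,
    hu] at hx
  obtain ⟨w, hw, hwv⟩ := exists_dotProduct_self_eq_one_modEq_four hx
  exact ⟨w, hw, ckMk_transpose_mulVec_eq_of_modEq Amat_two_eq_smul_gram isUnit_det_gramFactor hwv⟩

lemma dotProduct_eq_zero_of_linkR_eq {u v w z : Fin 2 → ℤ} (hw : w ⬝ᵥ w = 1) (hz : z ⬝ᵥ z = 1)
    (huv : u ⬝ᵥ v = 0)
    (hlink : linkR 2 (gramFactorᵀ *ᵥ w) (gramFactorᵀ *ᵥ z) =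
      linkR 2 (gramFactorᵀ *ᵥ u) (gramFactorᵀ *ᵥ v)) : w ⬝ᵥ z = 0 := by
  rw [linkR_eq_linkR_iff_of_gram Amat_two_eq_smul_gram four_ne_zero isUnit_det_gramFactor,
    huv] at hlink
  exact dotProduct_eq_zero_of_modEq (by norm_num) hw hz hlink

end RankTwo

/-- For h = 2, every group automorphism of ℤ^2/A_2 ℤ^2 preserving the boundary linking
form ∂λ and the boundary quadratic form ∂θ is induced, via [x] ↦ [(Pᵀ)⁻¹ x], by an isometry
P ∈ GL_2(ℤ) of A_2; i.e. the boundary map ∂ is surjective and bAut(ℤ^2, [Q_2]) is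
trivial. -/
theorem boundary_map_surjective_h2 (φ : Coker 2 ≃+ Coker 2)
    (hlink : ∀ x y x' y' : Fin 2 → ℤ, ckMk x' = φ (ckMk x) → ckMk y' = φ (ckMk y) →
      linkR 2 x' y' = linkR 2 x y)
    (hquad : ∀ x x' : Fin 2 → ℤ, ckMk x' = φ (ckMk x) → quadR 2 x' = quadR 2 x) :
    ∃ P : Matrix (Fin 2) (Fin 2) ℤ, IsUnit P.det ∧ Pᵀ * Amat 2 * P = Amat 2 ∧
      ∀ x : Fin 2 → ℤ, φ (ckMk x) = ckMk ((Pᵀ)⁻¹ *ᵥ x) := by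
  have hunit (j : Fin 2) : ∃ w : Fin 2 → ℤ, w ⬝ᵥ w = 1 ∧
      ckMk (gramFactorᵀ *ᵥ w) = φ (ckMk (gramFactorᵀ *ᵥ Pi.single j 1)) := by
    obtain ⟨x, hx⟩ := Submodule.Quotient.mk_surjective _ (φ (ckMk (gramFactorᵀ *ᵥ Pi.single j 1)))
    exact hx ▸ exists_unit_ckMk_eq_of_quadR_eq (by simp) (hquad _ _ hx)
  choose w hw hφw using hunit
  have horth : ∀ i j, i ≠ j → w i ⬝ᵥ w j = 0 := fun i j hij ↦
    dotProduct_eq_zero_of_linkR_eq (hw i) (hw j) (by simp [hij]) (hlink _ _ _ _ (hφw i) (hφw j))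
  refine exists_isometry_of_orthonormal_of_gram Amat_two_eq_smul_gram isUnit_det_gramFactor
    φ.toAddMonoidHom (fun i j ↦ ?_) fun j ↦ (hφw j).symm
  rcases eq_or_ne i j with rfl | hij
  · rw [hw, one_apply_eq]
  · rw [horth i j hij, one_apply_ne hij]
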